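/- arXiv:1506.06284 — 4 statements merged into one kernel-verified Lean document; each statement's English description precedes it below -/
import Mathlib

section
/- If a subproblem of the subset sum problem satisfies the C1-condition, i.e. ∑_{i∈I} (1−θ(i))·w_i ≥ W − C, then the 1-complement of its map (I, θ) is an optimal solution of this subproblem: it is feasible and its objective value is at least that of every feasible solution of the subproblem. -/
/-- If a subproblem of the subset sum problem (given by the map
`(I, θ)`) satisfies the C1-condition `∑_{i ∈ I} (1 − θ(i))·w_i ≥ W − C`, then
the 1-complement of its map (equal to `θ i` on `I`, and to `1` outside `I`) is
an optimal solution of this subproblem: it is feasible, and its objective value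
is at least that of every feasible solution of the subproblem. -/
theorem subproblem_C1_one_complement_optimal
    (n : ℕ) (w : Fin n → ℕ) (hw : ∀ i, 0 < w i) (C : ℕ) (hC : 0 < C)
    (I : Finset (Fin n)) (θ : Fin n → Bool)
    (hC1 : (∑ i, w i) - C ≤ ∑ i ∈ I, if θ i then 0 else w i) :
    ((∑ i, if (if i ∈ I then θ i else true) then w i else 0) ≤ C ∧
      ∀ i ∈ I, (if i ∈ I then θ i else true) = θ i) ∧
    ∀ y : Fin n → Bool,
      ((∑ i, if y i then w i else 0) ≤ C ∧ ∀ i ∈ I, y i = θ i) →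
      (∑ i, if y i then w i else 0) ≤
        ∑ i, if (if i ∈ I then θ i else true) then w i else 0 := by
  -- The weights kept by the 1-complement and those discarded on `I` add up to `W`.
  have key : (∑ i, if (if i ∈ I then θ i else true) then w i else 0)
      + (∑ i ∈ I, if θ i then 0 else w i) = ∑ i, w i := by
    have hI : (∑ i ∈ I, if θ i then 0 else w i)
        = ∑ i, if i ∈ I then (if θ i then 0 else w i) else 0 := by
      simp [Finset.sum_ite_mem]
    rw [hI, ← Finset.sum_add_distrib]
    refine Finset.sum_congr rfl fun i _ => ?_
    by_cases hi : i ∈ I <;> cases hθ : θ i <;> simp [hi]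
  refine ⟨⟨by omega, fun i hi => by simp [hi]⟩, ?_⟩
  -- A feasible `y` agrees with the 1-complement on `I` and is at most `1` elsewhere.
  rintro y ⟨-, hy⟩
  refine Finset.sum_le_sum fun i _ => ?_
  by_cases hi : i ∈ I
  · simp [hi, hy i hi]
  · cases hyi : y i <;> simp [hi]
end

section
/- For any integer s with n/2 < s ≤ n, there exists a pair of antichains in 𝒜_s which has the maximum cardinality among all pairs in 𝒜_s and in which every tuple has weight greater than or equal to ⌊n/2⌋. -/
/-!
A pair `(T', T'')` in `𝒜_s` can be pushed upwards, one level at a time, without losing cardinality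
and without moving `γ_s`, as long as its lowest level `k` satisfies `k + 1 ≤ ⌊n/2⌋`.

Let all weights in `T' ∪ T''` be at least `k`. Tuples of weight `k` in `T''` can be moved to `T'`,
so assume `T''` has weights at least `k + 1`. Let `F` be the set of tuples of weight `k` in `T'`,
`Δ` its upper shadow, `G` the set of tuples of weight `k + 1` in `T''`, `D = G ∩ Δ`, and `∇D` the
upper shadow of `D`. The new pair is `((T' \ F) ∪ Δ ∪ G, (T'' \ G) ∪ ∇D)`, and its cardinality
exceeds the old one by `|Δ| - |F| + |∇D| - |D|`. The local LYM inequality gives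
`(n - k)|F| ≤ (k + 1)|Δ|` and `(n - k - 1)|D| ≤ (k + 2)|∇D|`; together with `|D| ≤ |Δ|` they make
this difference nonnegative. (If `n = 2k + 2`, the second step alone may lose up to `|D|/(k + 2)`
tuples, but the first gains at least `|Δ|/(k + 2)`.) The tuple `γ_s` has weight `s > n/2 > k`, so
it stays in the first antichain.

Applying this repeatedly to a pair of maximum cardinality proves the theorem.
-/

/-- The weight of a binary tuple: the number of its 1-components. -/
def bweight {n : ℕ} (α : Fin n → Bool) : ℕ :=
  (Finset.univ.filter fun i => α i = true).card

/-- The tuple `γ_s ∈ Bⁿ` whose first `n - s` components equal `0` and whose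
last `s` components equal `1`. -/
def gammaTuple (n s : ℕ) : Fin n → Bool := fun i => decide (n - s ≤ (i : ℕ))

/-- `T' < T''`: there are no tuples `a ∈ T'`, `b ∈ T''` with `a ≥ b`. -/
def PairBelow {n : ℕ} (T' T'' : Set (Fin n → Bool)) : Prop :=
  ∀ a ∈ T', ∀ b ∈ T'', ¬ b ≤ a

/-- A pair `(T', T'')` of antichains in `Bⁿ` with `T' < T''`. -/
def AntichainPair {n : ℕ} (T' T'' : Set (Fin n → Bool)) : Prop :=
  IsAntichain (· ≤ ·) T' ∧ IsAntichain (· ≤ ·) T'' ∧ PairBelow T' T''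

/-- Membership of a pair of antichains in `𝒜_s`: a pair of antichains with
`T' < T''` and `γ_s ∈ T'`. -/
def MemA {n : ℕ} (s : ℕ) (T' T'' : Set (Fin n → Bool)) : Prop :=
  AntichainPair T' T'' ∧ gammaTuple n s ∈ T'

/-- Membership of a pair of antichains in `𝒜'_t`: a pair of antichains with
`T' < T''` in which every tuple has weight at most `t`. -/
def MemA' {n : ℕ} (t : ℕ) (T' T'' : Set (Fin n → Bool)) : Prop :=
  AntichainPair T' T'' ∧ ∀ α ∈ T' ∪ T'', bweight α ≤ t

/-! ### Weights and the local LYM inequality -/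

lemma bweight_mono {n : ℕ} {a b : Fin n → Bool} (h : a ≤ b) : bweight a ≤ bweight b := by
  apply Finset.card_le_card
  intro i hi
  simp only [Finset.mem_filter, Finset.mem_univ, true_and] at hi ⊢
  exact Bool.eq_true_of_true_le (hi ▸ h i)

lemma eq_of_le_of_bweight_le {n : ℕ} {a b : Fin n → Bool} (h : a ≤ b)
    (hw : bweight b ≤ bweight a) : a = b := by
  have hsub : (Finset.univ.filter fun i => a i = true) ⊆
      (Finset.univ.filter fun i => b i = true) := by
    intro i hi
    simp only [Finset.mem_filter, Finset.mem_univ, true_and] at hi ⊢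
    exact Bool.eq_true_of_true_le (hi ▸ h i)
  have heq := Finset.eq_of_subset_of_card_le hsub hw
  funext i
  have := Finset.ext_iff.mp heq i
  simp only [Finset.mem_filter, Finset.mem_univ, true_and] at this
  exact Bool.eq_iff_iff.mpr this

lemma bweight_gammaTuple {n s : ℕ} (hs : s ≤ n) : bweight (gammaTuple n s) = s := by
  unfold bweight gammaTuple
  rw [← Finset.card_map Fin.valEmbedding]
  have h : (Finset.univ.filter fun i : Fin n => decide (n - s ≤ (i : ℕ)) = true).map
      Fin.valEmbedding = Finset.Ico (n - s) n := by
    ext i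
    simp only [decide_eq_true_eq, Finset.mem_map, Finset.mem_filter, Finset.mem_univ, true_and,
      Fin.valEmbedding_apply, Finset.mem_Ico]
    constructor
    · rintro ⟨j, hj, rfl⟩
      exact ⟨hj, j.isLt⟩
    · rintro ⟨h1, h2⟩
      exact ⟨⟨i, h2⟩, h1, rfl⟩
  rw [h, Nat.card_Ico]
  omega

lemma bweight_update_true {n : ℕ} {a : Fin n → Bool} {i : Fin n} (hi : a i = false) :
    bweight (Function.update a i true) = bweight a + 1 := by
  unfold bweight
  have : (Finset.univ.filter fun j => Function.update a i true j = true) =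
      insert i (Finset.univ.filter fun j => a j = true) := by
    ext j
    by_cases h : j = i
    · subst h; simp
    · simp [h]
  rw [this, Finset.card_insert_of_notMem (by simp [hi])]

lemma exists_eq_update_false {n : ℕ} {a b : Fin n → Bool} (h : a ≤ b)
    (hw : bweight b = bweight a + 1) :
    ∃ i, b i = true ∧ a = Function.update b i false := by
  have hne : ∃ i, a i ≠ b i := by
    by_contra! hcon
    have : a = b := funext hcon
    subst this
    omega
  obtain ⟨i, hi⟩ := hne
  have hle := h i
  have hai : a i = false := by
    by_contra hA
    rw [Bool.not_eq_false] at hA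
    exact hi (hA.trans (Bool.eq_true_of_true_le (hA ▸ hle)).symm)
  have hbi : b i = true := by
    cases hB : b i <;> simp_all
  -- Raising `a` at `i` gives a tuple below `b` of the same weight as `b`.
  have hup : Function.update a i true ≤ b := by
    intro j
    by_cases hj : j = i
    · subst hj; simp [hbi]
    · simpa [hj] using h j
  have heq := eq_of_le_of_bweight_le hup (by rw [bweight_update_true hai]; omega)
  refine ⟨i, hbi, ?_⟩
  rw [← heq, Function.update_idem, ← hai, Function.update_eq_self]

/-- The upper shadow of `F`: all tuples obtained from a tuple of `F` by changing one `0` to `1`. -/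
def upShadow {n : ℕ} (F : Set (Fin n → Bool)) : Set (Fin n → Bool) :=
  {b | ∃ a ∈ F, a ≤ b ∧ bweight b = bweight a + 1}

/-- The tuples of weight `k` in `A`. -/
def lev {n : ℕ} (A : Set (Fin n → Bool)) (k : ℕ) : Set (Fin n → Bool) :=
  {a | a ∈ A ∧ bweight a = k}

/-- The local LYM inequality for upper shadows, by double counting the pairs `a ≤ b` with `a ∈ F`,
`b ∈ upShadow F`: each `a` lies below exactly `n - k` such `b`, and each `b` lies above at most
`k + 1` such `a`. -/
lemma local_lym_upShadow {n k : ℕ} {F : Set (Fin n → Bool)} (hF : ∀ a ∈ F, bweight a = k) :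
    F.ncard * (n - k) ≤ (upShadow F).ncard * (k + 1) := by
  classical
  rw [Set.ncard_eq_toFinset_card' F, Set.ncard_eq_toFinset_card' (upShadow F)]
  apply Finset.card_mul_le_card_mul (fun a b => a ≤ b)
  · intro a ha
    rw [Set.mem_toFinset] at ha
    have hinj : Set.InjOn (fun i => Function.update a i true)
        ((Finset.univ.filter fun i => a i = false) : Finset (Fin n)) := by
      intro i hi j hj hij
      by_contra hne
      have h := congrFun hij i
      simp only [Finset.coe_filter, Finset.mem_univ, true_and, Set.mem_ofPred_eq] at hi
      simp [hne, hi] at h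
    have hcard : (Finset.univ.filter fun i => a i = false).card = n - k := by
      have h := Finset.card_filter_add_card_filter_not (s := (Finset.univ : Finset (Fin n)))
        (fun i => a i = true)
      have hk := hF a ha
      unfold bweight at hk
      simp only [Bool.not_eq_true, Finset.card_univ, Fintype.card_fin] at h
      omega
    rw [← hcard, ← Finset.card_image_of_injOn hinj]
    apply Finset.card_le_card
    intro b hb
    simp only [Finset.mem_image, Finset.mem_filter, Finset.mem_univ, true_and] at hb
    obtain ⟨i, hi, rfl⟩ := hb
    have hle : a ≤ Function.update a i true := by
      intro j
      by_cases hj : j = i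
      · subst hj; simp [hi]
      · simp [hj]
    rw [Finset.mem_bipartiteAbove, Set.mem_toFinset]
    exact ⟨⟨a, ha, hle, bweight_update_true hi⟩, hle⟩
  · intro b hb
    rw [Set.mem_toFinset] at hb
    obtain ⟨a₀, ha₀, -, hw₀⟩ := hb
    have hbk : bweight b = k + 1 := by rw [hw₀, hF a₀ ha₀]
    have hsub : F.toFinset.bipartiteBelow (fun a b => a ≤ b) b ⊆
        (Finset.univ.filter fun i => b i = true).image (fun i => Function.update b i false) := by
      intro a ha
      rw [Finset.mem_bipartiteBelow, Set.mem_toFinset] at ha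
      obtain ⟨i, hi, rfl⟩ := exists_eq_update_false ha.2 (by rw [hbk, hF a ha.1])
      exact Finset.mem_image_of_mem _ (by simpa using hi)
    exact ((Finset.card_le_card hsub).trans Finset.card_image_le).trans hbk.le

/-! ### Pushing one antichain up -/

/-- Deleting the lowest level `j` of an antichain and adding the upper shadow of a part of that
level gives an antichain. -/
lemma isAntichain_push {n j : ℕ} {A D : Set (Fin n → Bool)} (hA : IsAntichain (· ≤ ·) A)
    (hw : ∀ a ∈ A, j ≤ bweight a) (hD : D ⊆ lev A j) :
    IsAntichain (· ≤ ·) ((A \ lev A j) ∪ upShadow D) := by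
  rintro a (⟨ha, haj⟩ | ⟨d, hd, hda, hwa⟩) b (⟨hb, hbj⟩ | ⟨e, he, heb, hwb⟩) hne hab
  · exact hA ha hb hne hab
  · have h1 := (hD he).2
    have h2 : bweight a ≠ j := fun h => haj ⟨ha, h⟩
    have h3 := hw a ha
    exact hne (eq_of_le_of_bweight_le hab (by omega))
  · have h1 := hD hd
    refine hA h1.1 hb ?_ (hda.trans hab)
    rintro rfl
    exact hbj h1
  · have h1 := (hD hd).2
    have h2 := (hD he).2
    exact hne (eq_of_le_of_bweight_le hab (by omega))

lemma ncard_push {n j : ℕ} {A D : Set (Fin n → Bool)} (hA : IsAntichain (· ≤ ·) A)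
    (hD : D ⊆ lev A j) :
    ((A \ lev A j) ∪ upShadow D).ncard + (lev A j).ncard = A.ncard + (upShadow D).ncard := by
  have hdisj : Disjoint (A \ lev A j) (upShadow D) := by
    rw [Set.disjoint_left]
    rintro a ⟨ha, haj⟩ ⟨d, hd, hda, -⟩
    refine hA (hD hd).1 ha ?_ hda
    rintro rfl
    exact haj (hD hd)
  rw [Set.ncard_union_eq hdisj (Set.toFinite _) (Set.toFinite _)]
  have := Set.ncard_sdiff_add_ncard_of_subset (s := lev A j) (t := A) (fun a ha => ha.1)
    (Set.toFinite _)
  omega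

/-! ### Pushing a pair of antichains up -/

/-- The tuples of the lowest level `k` can all be moved to the first antichain. -/
lemma exists_pair_lowest_level_left {n s k : ℕ} {T' T'' : Set (Fin n → Bool)} (h : MemA s T' T'')
    (hw : ∀ a ∈ T' ∪ T'', k ≤ bweight a) :
    ∃ U' U'' : Set (Fin n → Bool), MemA s U' U'' ∧
      T'.ncard + T''.ncard = U'.ncard + U''.ncard ∧
      (∀ a ∈ U', k ≤ bweight a) ∧ ∀ a ∈ U'', k + 1 ≤ bweight a := by
  obtain ⟨⟨h1, h2, h3⟩, hγ⟩ := h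
  refine ⟨T' ∪ lev T'' k, T'' \ lev T'' k, ⟨⟨?_, h2.subset Set.sdiff_subset, ?_⟩, Or.inl hγ⟩,
    ?_, ?_, ?_⟩
  · rintro a (ha | ha) b (hb | hb) hne hab
    · exact h1 ha hb hne hab
    · have := hw a (Or.inl ha)
      exact hne (eq_of_le_of_bweight_le hab (by rw [hb.2]; exact this))
    · exact h3 b hb a ha.1 hab
    · exact h2 ha.1 hb.1 hne hab
  · rintro a (ha | ha) b ⟨hb, hbk⟩ hba
    · exact h3 a ha b hb hba
    · refine h2 hb ha.1 ?_ hba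
      rintro rfl
      exact hbk ha
  · have hdisj : Disjoint T' (lev T'' k) := by
      rw [Set.disjoint_left]
      exact fun a ha hb => h3 a ha a hb.1 le_rfl
    rw [Set.ncard_union_eq hdisj (Set.toFinite _) (Set.toFinite _)]
    have := Set.ncard_sdiff_add_ncard_of_subset (s := lev T'' k) (t := T'') (fun a ha => ha.1)
      (Set.toFinite _)
    omega
  · rintro a (ha | ha)
    · exact hw a (Or.inl ha)
    · exact ha.2.ge
  · rintro a ⟨ha, hak⟩
    have := hw a (Or.inr ha)
    have : bweight a ≠ k := fun h => hak ⟨ha, h⟩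
    omega

/-- The two local LYM inequalities combine to show that the push loses nothing; here `f`, `δ`, `d`,
`e` are the cardinalities of `F`, `Δ`, `D`, `∇D`. -/
lemma push_arith {n k f δ d e : ℕ} (hk : k + 1 ≤ n / 2) (h1 : f * (n - k) ≤ δ * (k + 1))
    (h2 : d * (n - (k + 1)) ≤ e * (k + 1 + 1)) (h3 : d ≤ δ) : f + d ≤ δ + e := by
  obtain ⟨r, rfl⟩ : ∃ r, n = 2 * k + 2 + r := ⟨n - (2 * k + 2), by omega⟩
  have e1 : 2 * k + 2 + r - k = k + 2 + r := by omega
  have e2 : 2 * k + 2 + r - (k + 1) = k + 1 + r := by omega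
  rw [e1] at h1
  rw [e2] at h2
  rcases Nat.eq_zero_or_pos r with rfl | hr
  · have : (f + d) * (k + 2) ≤ (δ + e) * (k + 2) := by nlinarith
    exact Nat.le_of_mul_le_mul_right this (by omega)
  · have hf : f ≤ δ := by
      refine Nat.le_of_mul_le_mul_right (c := k + 1) ?_ (by omega)
      exact (Nat.mul_le_mul_left f (by omega)).trans h1
    have hd : d ≤ e := by
      refine Nat.le_of_mul_le_mul_right (c := k + 1 + 1) ?_ (by omega)
      exact (Nat.mul_le_mul_left d (by omega)).trans h2
    omega

lemma exists_pair_push {n s k : ℕ} (hs1 : n < 2 * s) (hs2 : s ≤ n) (hk : k + 1 ≤ n / 2)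
    {T' T'' : Set (Fin n → Bool)} (h : MemA s T' T'') (hw' : ∀ a ∈ T', k ≤ bweight a)
    (hw'' : ∀ a ∈ T'', k + 1 ≤ bweight a) :
    ∃ U' U'' : Set (Fin n → Bool), MemA s U' U'' ∧
      T'.ncard + T''.ncard ≤ U'.ncard + U''.ncard ∧
      ∀ a ∈ U' ∪ U'', k + 1 ≤ bweight a := by
  obtain ⟨⟨h1, h2, h3⟩, hγ⟩ := h
  set F := lev T' k with hF
  set G := lev T'' (k + 1) with hG
  set D := G ∩ upShadow F with hDdef
  have hD : D ⊆ lev T'' (k + 1) := Set.inter_subset_left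
  have hΔw : ∀ a ∈ upShadow F, bweight a = k + 1 := by
    rintro a ⟨f, hf, -, hwa⟩
    rw [hwa, hf.2]
  have hDw : ∀ a ∈ upShadow D, bweight a = k + 2 := by
    rintro a ⟨f, hf, -, hwa⟩
    rw [hwa, (hD hf).2]
  have hT'w : ∀ a ∈ T' \ F, k + 1 ≤ bweight a := by
    rintro a ⟨ha, haF⟩
    have := hw' a ha
    have : bweight a ≠ k := fun h => haF ⟨ha, h⟩
    omega
  have hT''w : ∀ a ∈ T'' \ G, k + 2 ≤ bweight a := by
    rintro a ⟨ha, haG⟩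
    have := hw'' a ha
    have : bweight a ≠ k + 1 := fun h => haG ⟨ha, h⟩
    omega
  have hPw : ∀ a ∈ (T' \ F) ∪ upShadow F, k + 1 ≤ bweight a := by
    rintro a (ha | ha)
    · exact hT'w a ha
    · exact (hΔw a ha).ge
  have hP := isAntichain_push h1 hw' (subset_refl (lev T' k))
  rw [← hF] at hP
  have hQ := isAntichain_push h2 hw'' hD
  rw [← hG] at hQ
  refine ⟨((T' \ F) ∪ upShadow F) ∪ G, (T'' \ G) ∪ upShadow D, ⟨⟨?_, hQ, ?_⟩, ?_⟩, ?_, ?_⟩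
  · rintro a (ha | ha) b (hb | hb) hne hab
    · exact hP ha hb hne hab
    · have := hPw a ha
      exact hne (eq_of_le_of_bweight_le hab (by rw [hb.2]; exact this))
    · rcases hb with hb | hb
      · exact h3 b hb.1 a ha.1 hab
      · exact hne (eq_of_le_of_bweight_le hab (by rw [hΔw b hb, ha.2]))
    · exact h2 ha.1 hb.1 hne hab
    -- The new second antichain has weights at least `k + 2`, so only `T' \ F` could lie above it.
  · have hbw : ∀ b ∈ (T'' \ G) ∪ upShadow D, k + 2 ≤ bweight b := by
      rintro b (hb | hb)
      · exact hT''w b hb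
      · exact (hDw b hb).ge
    rintro a ((ha | ha) | ha) b hb hba
    · rcases hb with hb | ⟨d, hd, hdb, -⟩
      · exact h3 a ha.1 b hb.1 hba
      · exact h3 a ha.1 d (hD hd).1 (hdb.trans hba)
    · have := bweight_mono hba
      have := hbw b hb
      have := hΔw a ha
      omega
    · have := bweight_mono hba
      have := hbw b hb
      have := ha.2
      omega
  · refine Or.inl (Or.inl ⟨hγ, fun hγF => ?_⟩)
    have := hγF.2
    rw [bweight_gammaTuple hs2] at this
    omega
  · have c1 := ncard_push h1 (subset_refl (lev T' k))
    have c2 := ncard_push h2 hD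
    rw [← hF] at c1
    rw [← hG] at c2
    -- `G` meets the pushed first antichain exactly in `D`.
    have hint : ((T' \ F) ∪ upShadow F) ∩ G = D := by
      ext a
      constructor
      · rintro ⟨ha | ha, hg⟩
        · exact (h3 a ha.1 a hg.1 le_rfl).elim
        · exact ⟨hg, ha⟩
      · rintro ⟨hg, ha⟩
        exact ⟨Or.inr ha, hg⟩
    have c3 := Set.ncard_union_add_ncard_inter ((T' \ F) ∪ upShadow F) G
      (Set.toFinite _) (Set.toFinite _)
    rw [hint] at c3
    have l1 := local_lym_upShadow (F := F) (k := k) (fun a ha => ha.2)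
    have l2 := local_lym_upShadow (F := D) (k := k + 1) (fun a ha => (hD ha).2)
    have l3 : D.ncard ≤ (upShadow F).ncard :=
      Set.ncard_le_ncard Set.inter_subset_right (Set.toFinite _)
    have := push_arith hk l1 l2 l3
    omega
  · rintro a ((ha | ha) | (ha | ha))
    · exact hPw a ha
    · exact ha.2.ge
    · have := hT''w a ha
      omega
    · have := hDw a ha
      omega

lemma exists_pair_weights_ge {n s : ℕ} (hs1 : n < 2 * s) (hs2 : s ≤ n)
    {T' T'' : Set (Fin n → Bool)} (h : MemA s T' T'') (k : ℕ) (hk : k ≤ n / 2) :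
    ∃ U' U'' : Set (Fin n → Bool), MemA s U' U'' ∧
      T'.ncard + T''.ncard ≤ U'.ncard + U''.ncard ∧
      ∀ a ∈ U' ∪ U'', k ≤ bweight a := by
  induction k with
  | zero => exact ⟨T', T'', h, le_rfl, fun _ _ => Nat.zero_le _⟩
  | succ k ih =>
    obtain ⟨U', U'', hU, hcU, hwU⟩ := ih (by omega)
    obtain ⟨V', V'', hV, hcV, hwV', hwV''⟩ := exists_pair_lowest_level_left hU hwU
    obtain ⟨W', W'', hW, hcW, hwW⟩ := exists_pair_push hs1 hs2 hk hV hwV' hwV''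
    exact ⟨W', W'', hW, by omega, hwW⟩

/-- For any integer `s` with `n/2 < s ≤ n`, there exists a
pair of antichains in `𝒜_s` which has the maximum cardinality among all pairs
in `𝒜_s` and in which every tuple has weight at least `⌊n/2⌋`. -/
theorem exists_max_pair_with_weights_ge {n s : ℕ} (hs1 : n < 2 * s) (hs2 : s ≤ n) :
    ∃ T' T'' : Set (Fin n → Bool), MemA s T' T'' ∧
      (∀ U' U'' : Set (Fin n → Bool), MemA s U' U'' →
        U'.ncard + U''.ncard ≤ T'.ncard + T''.ncard) ∧
      ∀ α ∈ T' ∪ T'', n / 2 ≤ bweight α := by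
  classical
  have hne : {p : Set (Fin n → Bool) × Set (Fin n → Bool) | MemA s p.1 p.2}.Nonempty := by
    refine ⟨({gammaTuple n s}, ∅), ⟨⟨?_, ?_, ?_⟩, rfl⟩⟩
    · exact IsAntichain.singleton
    · exact fun a ha => ha.elim
    · intro a _ b hb
      exact hb.elim
  obtain ⟨⟨M', M''⟩, hM, hmax⟩ := Set.exists_max_image _
    (fun p : Set (Fin n → Bool) × Set (Fin n → Bool) => p.1.ncard + p.2.ncard)
    (Set.toFinite _) hne
  obtain ⟨T', T'', hT, hcT, hwT⟩ := exists_pair_weights_ge hs1 hs2 hM (n / 2) le_rfl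
  exact ⟨T', T'', hT, fun U' U'' hU => (hmax (U', U'') hU).trans hcT, hwT⟩
end

section
/- For any integer s with n/2 < s ≤ n, there exists a pair of antichains in 𝒜_s which has the maximum cardinality among all pairs in 𝒜_s and in which every tuple other than γ_s has weight at most (n+3)/2 and at least ⌊n/2⌋. -/
open Finset
open scoped FinsetFamily

/-- Families of subsets without 3-chains in which `g` is a minimal member; these are the unions
`T' ∪ T''` of the pairs of antichains `T' < T''` with `g ∈ T'`. -/
def GoodFamily {n : ℕ} (g : Finset (Fin n)) (F : Finset (Finset (Fin n))) : Prop :=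
  g ∈ F ∧ (∀ x ∈ F, ¬ x ⊂ g) ∧ ∀ x ∈ F, ∀ y ∈ F, ∀ z ∈ F, x ⊂ y → ¬ y ⊂ z

/-- The members of the shadow of `A` that are not contained in `g`. -/
def outerShadow {n : ℕ} (g : Finset (Fin n)) (A : Finset (Finset (Fin n))) :
    Finset (Finset (Fin n)) :=
  (∂ A).filter fun x => ¬ x ⊆ g

/-! ### Counting -/

/-- With `a = |A|`, `d` the size of the shadow of `A`, `c = |C|` and `e` the size of the shadow of
`C`, this turns the two local LYM inequalities into the gain of a push. -/
lemma card_le_of_two_steps {a c d e p q : ℕ} (hp : 1 ≤ p) (hpq : p ≤ q)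
    (h1 : a * (q + 1) ≤ (d + c) * p) (h2 : c * q ≤ e * (p + 1)) : a ≤ d + e := by
  have hq : 0 < (q + 1) * q := Nat.mul_pos (by omega) (by omega)
  refine Nat.le_of_mul_le_mul_right ?_ hq
  calc a * ((q + 1) * q) = a * (q + 1) * q := by ring
    _ ≤ (d + c) * p * q := Nat.mul_le_mul_right _ h1
    _ = d * (p * q) + c * q * p := by ring
    _ ≤ d * (p * q) + e * (p + 1) * p := by gcongr
    _ = d * (p * q) + e * ((p + 1) * p) := by ring
    _ ≤ d * ((q + 1) * q) + e * ((q + 1) * q) := by gcongr; omega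
    _ = (d + e) * ((q + 1) * q) := by ring

lemma card_mul_le_upShadow {n k : ℕ} {A : Finset (Finset (Fin n))} (hA : ∀ a ∈ A, #a = k) :
    #A * (n - k) ≤ #(∂⁺ A) * (k + 1) := by
  refine card_mul_le_card_mul (fun a b => a ⊂ b) ?_ ?_
  · intro a ha
    have hinj : Set.InjOn (fun i => insert i a) (aᶜ : Finset (Fin n)) := by
      intro i hi j hj hij
      simp only [coe_compl, Set.mem_compl_iff, mem_coe] at hi hj
      have : i ∈ insert j a := by
        have h : i ∈ insert i a := mem_insert_self i a
        simp only at hij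
        rwa [hij] at h
      grind
    calc n - k = #(aᶜ.image fun i => insert i a) := by
          rw [card_image_of_injOn hinj, card_compl, Fintype.card_fin, hA a ha]
      _ ≤ _ := by
          refine card_le_card fun y hy => ?_
          obtain ⟨i, hi, rfl⟩ := mem_image.1 hy
          have hi' : i ∉ a := by simpa using hi
          exact (mem_bipartiteAbove _).2 ⟨insert_mem_upShadow ha hi', ssubset_insert hi'⟩
  · intro b hb
    obtain ⟨a, ha, i, hi, rfl⟩ := mem_upShadow_iff.1 hb
    have hcard : #(insert i a) = k + 1 := by rw [card_insert_of_notMem hi, hA a ha]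
    rw [← hcard]
    refine le_trans (card_le_card fun y hy => ?_) (card_image_le (f := fun j => (insert i a).erase j))
    obtain ⟨hyA, hy⟩ := (mem_bipartiteBelow _).1 hy
    obtain ⟨j, hj, hyj⟩ := exists_of_ssubset hy
    refine mem_image.2 ⟨j, hj, ?_⟩
    refine (eq_of_subset_of_card_le (subset_erase.2 ⟨hy.1, hyj⟩) ?_).symm
    rw [card_erase_of_mem hj, hcard, hA y hyA]
    omega

lemma card_mul_le_outerShadow {n k : ℕ} {g : Finset (Fin n)} {A : Finset (Finset (Fin n))}
    (hA : ∀ a ∈ A, #a = k) (hg : ∀ a ∈ A, ¬ a ⊆ g) :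
    #A * (k - 1) ≤ #(outerShadow g A) * (n - (k - 1)) := by
  refine card_mul_le_card_mul (fun a b => b ⊂ a) ?_ ?_
  · intro a ha
    -- Deleting any element but `i₀` leaves a set that still sticks out of `g`.
    obtain ⟨i₀, hi₀, hi₀g⟩ := not_subset.1 (hg a ha)
    have hinj : Set.InjOn (fun i => a.erase i) (a.erase i₀ : Finset (Fin n)) :=
      (erase_injOn a).mono (by simp)
    calc k - 1 = #((a.erase i₀).image fun i => a.erase i) := by
          rw [card_image_of_injOn hinj, card_erase_of_mem hi₀, hA a ha]
      _ ≤ _ := by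
          refine card_le_card fun y hy => ?_
          obtain ⟨i, hi, rfl⟩ := mem_image.1 hy
          obtain ⟨hne, hia⟩ := mem_erase.1 hi
          refine (mem_bipartiteAbove _).2
            ⟨mem_filter.2 ⟨erase_mem_shadow ha hia, fun h => hi₀g (h ?_)⟩, erase_ssubset hia⟩
          exact mem_erase.2 ⟨hne.symm, hi₀⟩
  · intro b hb
    obtain ⟨a, ha, i, hi, rfl⟩ := mem_shadow_iff.1 (mem_filter.1 hb).1
    have hcard : #(a.erase i) = k - 1 := by rw [card_erase_of_mem hi, hA a ha]
    have hk : 1 ≤ k := by rw [← hA a ha]; exact card_pos.2 ⟨i, hi⟩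
    have hc : n - (k - 1) = #(a.erase i)ᶜ := by rw [card_compl, Fintype.card_fin, hcard]
    rw [hc]
    refine le_trans (card_le_card fun y hy => ?_) (card_image_le (f := fun j => insert j (a.erase i)))
    obtain ⟨hyA, hy⟩ := (mem_bipartiteBelow _).1 hy
    obtain ⟨j, hj, hyj⟩ := exists_of_ssubset hy
    refine mem_image.2 ⟨j, mem_compl.2 hyj, ?_⟩
    refine eq_of_subset_of_card_le (insert_subset hj hy.1) ?_
    rw [card_insert_of_notMem hyj, hcard, hA y hyA]
    omega

/-! ### The two pushes -/

lemma exists_of_mem_upShadow {n k : ℕ} {A : Finset (Finset (Fin n))} {x : Finset (Fin n)}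
    (hA : ∀ a ∈ A, #a = k) (hx : x ∈ ∂⁺ A) : #x = k + 1 ∧ ∃ a ∈ A, a ⊂ x := by
  obtain ⟨a, ha, i, hi, rfl⟩ := mem_upShadow_iff.1 hx
  exact ⟨by rw [card_insert_of_notMem hi, hA a ha], a, ha, ssubset_insert hi⟩

lemma exists_of_mem_outerShadow {n k : ℕ} {g : Finset (Fin n)} {A : Finset (Finset (Fin n))}
    {x : Finset (Fin n)} (hA : ∀ a ∈ A, #a = k) (hx : x ∈ outerShadow g A) :
    #x + 1 = k ∧ ¬ x ⊆ g ∧ ∃ a ∈ A, x ⊂ a := by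
  obtain ⟨hx, hxg⟩ := mem_filter.1 hx
  obtain ⟨a, ha, i, hi, rfl⟩ := mem_shadow_iff.1 hx
  exact ⟨by rw [card_erase_add_one hi, hA a ha], hxg, a, ha, erase_ssubset hi⟩

lemma GoodFamily.push_up {n k : ℕ} {g : Finset (Fin n)} {F : Finset (Finset (Fin n))}
    (hF : GoodFamily g F) (hg : n < 2 * #g) (hk : ∃ x ∈ F, #x = k) (hmin : ∀ x ∈ F, k ≤ #x)
    (hkn : 2 * k + 2 ≤ n) :
    ∃ A N : Finset (Finset (Fin n)), A ⊆ F ∧ A.Nonempty ∧ Disjoint N F ∧ #A ≤ #N ∧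
      GoodFamily g (F \ A ∪ N) ∧ (∀ a ∈ A, #a = k) ∧ ∀ x ∈ N, #x = k + 1 ∨ #x = k + 2 := by
  obtain ⟨hgF, hlow, hchain⟩ := hF
  set A := F.filter fun x => #x = k with hAdef
  set C := F ∩ ∂⁺ A with hCdef
  have hA : ∀ a ∈ A, #a = k := fun a ha => (mem_filter.1 ha).2
  have hAF : A ⊆ F := filter_subset _ _
  have hD : ∀ x ∈ ∂⁺ A, #x = k + 1 ∧ ∃ a ∈ A, a ⊂ x := fun x => exists_of_mem_upShadow hA
  have hC : ∀ c ∈ C, #c = k + 1 := fun c hc => (hD c (mem_inter.1 hc).2).1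
  have hE : ∀ x ∈ ∂⁺ C, #x = k + 2 ∧ ∃ c ∈ C, c ⊂ x := fun x => exists_of_mem_upShadow hC
  -- Every member of the second shadow tops a 2-chain of `F`.
  have hE2 : ∀ x ∈ ∂⁺ C, ∃ c ∈ F, ∃ a ∈ F, a ⊂ c ∧ c ⊂ x := by
    intro x hx
    obtain ⟨-, c, hc, hcx⟩ := hE x hx
    obtain ⟨hcF, hcD⟩ := mem_inter.1 hc
    obtain ⟨-, a, ha, hac⟩ := hD c hcD
    exact ⟨c, hcF, a, hAF ha, hac, hcx⟩
  have hEF : Disjoint (∂⁺ C) F := by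
    refine disjoint_left.2 fun x hx hxF => ?_
    obtain ⟨c, hc, a, ha, hac, hcx⟩ := hE2 x hx
    exact hchain a ha c hc x hxF hac hcx
  have hNcard : #((∂⁺ A \ F) ∪ ∂⁺ C) = #(∂⁺ A \ F) + #(∂⁺ C) := by
    refine card_union_of_disjoint (disjoint_left.2 fun x hx hx' => ?_)
    have h1 := (hD x (mem_sdiff.1 hx).1).1
    have h2 := (hE x hx').1
    omega
  have hDcard : #(∂⁺ A \ F) + #C = #(∂⁺ A) := by
    rw [hCdef, inter_comm]; exact card_sdiff_add_card_inter _ _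
  have hAg : ∀ a ∈ A, ¬ a ⊆ g := by
    intro a ha hag
    rcases hag.eq_or_ssubset with rfl | h
    · have := hA _ ha; omega
    · exact hlow a (hAF ha) h
  refine ⟨A, (∂⁺ A \ F) ∪ ∂⁺ C, hAF, ?_, ?_, ?_, ⟨?_, ?_, ?_⟩, hA, ?_⟩
  · obtain ⟨x, hx, hxk⟩ := hk
    exact ⟨x, mem_filter.2 ⟨hx, hxk⟩⟩
  · exact disjoint_union_left.2 ⟨sdiff_disjoint, hEF⟩
  · rw [hNcard]
    refine card_le_of_two_steps (p := k + 1) (q := n - (k + 1)) (c := #C) (by omega) (by omega)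
      ?_ ?_
    · rw [hDcard, show n - (k + 1) + 1 = n - k by omega]
      exact card_mul_le_upShadow hA
    · exact card_mul_le_upShadow hC
  · refine mem_union_left _ (mem_sdiff.2 ⟨hgF, fun h => ?_⟩)
    have := hA g h
    omega
  · intro x hx hxg
    rcases mem_union.1 hx with hx | hx
    · exact hlow x (mem_sdiff.1 hx).1 hxg
    rcases mem_union.1 hx with hx | hx
    · obtain ⟨-, a, ha, hax⟩ := hD x (mem_sdiff.1 hx).1
      exact hAg a ha (hax.trans hxg).subset
    · obtain ⟨c, hc, a, ha, hac, hcx⟩ := hE2 x hx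
      exact hlow c hc (hcx.trans hxg)
  · have hlev : ∀ x ∈ F \ A ∪ (∂⁺ A \ F ∪ ∂⁺ C), k + 1 ≤ #x ∧
        (x ∈ F ∨ x ∈ ∂⁺ A ∨ x ∈ ∂⁺ C) := by
      intro x hx
      rcases mem_union.1 hx with hx | hx
      · obtain ⟨hxF, hxA⟩ := mem_sdiff.1 hx
        have h1 := hmin x hxF
        have h2 : #x ≠ k := fun h => hxA (mem_filter.2 ⟨hxF, h⟩)
        exact ⟨by omega, Or.inl hxF⟩
      rcases mem_union.1 hx with hx | hx
      · have := (hD x (mem_sdiff.1 hx).1).1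
        exact ⟨by omega, Or.inr (Or.inl (mem_sdiff.1 hx).1)⟩
      · have := (hE x hx).1
        exact ⟨by omega, Or.inr (Or.inr hx)⟩
    intro x hx y hy z hz hxy hyz
    obtain ⟨hxk, hx⟩ := hlev x hx
    obtain ⟨-, hy⟩ := hlev y hy
    obtain ⟨-, hz⟩ := hlev z hz
    have hxy' := card_lt_card hxy
    have hyz' := card_lt_card hyz
    have hzF : z ∈ F := by
      rcases hz with h | h | h
      · exact h
      · have := (hD z h).1; omega
      · have := (hE z h).1; omega
    rcases hy with hy | hy | hy
    · rcases hx with hx | hx | hx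
      · exact hchain x hx y hy z hzF hxy hyz
      · obtain ⟨-, a, ha, hax⟩ := hD x hx
        exact hchain a (hAF ha) y hy z hzF (hax.trans hxy) hyz
      · obtain ⟨c, hc, a, ha, hac, hcx⟩ := hE2 x hx
        exact hchain a ha c hc y hy hac (hcx.trans hxy)
    · have := (hD y hy).1; omega
    · obtain ⟨c, hc, a, ha, hac, hcy⟩ := hE2 y hy
      exact hchain a ha c hc z hzF hac (hcy.trans hyz)
  · intro x hx
    rcases mem_union.1 hx with hx | hx
    · exact Or.inl (hD x (mem_sdiff.1 hx).1).1
    · exact Or.inr (hE x hx).1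

lemma GoodFamily.push_down {n k : ℕ} {g : Finset (Fin n)} {F : Finset (Finset (Fin n))}
    (hF : GoodFamily g F) (hk : ∃ x ∈ F, x ≠ g ∧ #x = k) (hmax : ∀ x ∈ F, x ≠ g → #x ≤ k)
    (hkn : n + 3 ≤ 2 * k) :
    ∃ A N : Finset (Finset (Fin n)), A ⊆ F ∧ A.Nonempty ∧ Disjoint N F ∧ #A ≤ #N ∧
      GoodFamily g (F \ A ∪ N) ∧ (∀ a ∈ A, #a = k) ∧ ∀ x ∈ N, #x + 1 = k ∨ #x + 2 = k := by
  obtain ⟨hgF, hlow, hchain⟩ := hF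
  have hFg : ∀ x ∈ F, x ≠ g → ¬ x ⊆ g := fun x hx hne hxg =>
    hlow x hx (hxg.ssubset_of_ne hne)
  have hkle : k ≤ n := by
    obtain ⟨x, -, -, rfl⟩ := hk
    simpa using card_le_univ x
  set A := F.filter fun x => x ≠ g ∧ #x = k with hAdef
  set C := F ∩ outerShadow g A with hCdef
  have hA : ∀ a ∈ A, #a = k := fun a ha => (mem_filter.1 ha).2.2
  have hAF : A ⊆ F := filter_subset _ _
  have hAg : ∀ a ∈ A, ¬ a ⊆ g := fun a ha => hFg a (hAF ha) (mem_filter.1 ha).2.1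
  have hD : ∀ x ∈ outerShadow g A, #x + 1 = k ∧ ¬ x ⊆ g ∧ ∃ a ∈ A, x ⊂ a :=
    fun x => exists_of_mem_outerShadow hA
  have hC : ∀ c ∈ C, #c = k - 1 := fun c hc => by
    have := (hD c (mem_inter.1 hc).2).1
    omega
  have hCg : ∀ c ∈ C, ¬ c ⊆ g := fun c hc => (hD c (mem_inter.1 hc).2).2.1
  have hE : ∀ x ∈ outerShadow g C, #x + 2 = k ∧ ¬ x ⊆ g := by
    intro x hx
    obtain ⟨h1, h2, -⟩ := exists_of_mem_outerShadow hC hx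
    exact ⟨by omega, h2⟩
  -- Every member of the second shadow lies below a 2-chain of `F`.
  have hE2 : ∀ x ∈ outerShadow g C, ∃ c ∈ F, ∃ a ∈ F, c ⊂ a ∧ x ⊂ c := by
    intro x hx
    obtain ⟨-, -, c, hc, hxc⟩ := exists_of_mem_outerShadow hC hx
    obtain ⟨hcF, hcD⟩ := mem_inter.1 hc
    obtain ⟨-, -, a, ha, hca⟩ := hD c hcD
    exact ⟨c, hcF, a, hAF ha, hca, hxc⟩
  have hEF : Disjoint (outerShadow g C) F := by
    refine disjoint_left.2 fun x hx hxF => ?_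
    obtain ⟨c, hc, a, ha, hca, hxc⟩ := hE2 x hx
    exact hchain x hxF c hc a ha hxc hca
  have hNcard : #((outerShadow g A \ F) ∪ outerShadow g C) =
      #(outerShadow g A \ F) + #(outerShadow g C) := by
    refine card_union_of_disjoint (disjoint_left.2 fun x hx hx' => ?_)
    have h1 := (hD x (mem_sdiff.1 hx).1).1
    have h2 := (hE x hx').1
    omega
  have hDcard : #(outerShadow g A \ F) + #C = #(outerShadow g A) := by
    rw [hCdef, inter_comm]; exact card_sdiff_add_card_inter _ _
  refine ⟨A, (outerShadow g A \ F) ∪ outerShadow g C, hAF, ?_, ?_, ?_, ⟨?_, ?_, ?_⟩, hA, ?_⟩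
  · obtain ⟨x, hx, hxk⟩ := hk
    exact ⟨x, mem_filter.2 ⟨hx, hxk⟩⟩
  · exact disjoint_union_left.2 ⟨sdiff_disjoint, hEF⟩
  · rw [hNcard]
    refine card_le_of_two_steps (p := n - (k - 1)) (q := k - 2) (c := #C) (by omega) (by omega)
      ?_ ?_
    · rw [hDcard, show k - 2 + 1 = k - 1 by omega]
      exact card_mul_le_outerShadow hA hAg
    · have h := card_mul_le_outerShadow hC hCg
      rwa [show k - 1 - 1 = k - 2 by omega, show n - (k - 2) = n - (k - 1) + 1 by omega] at h
  · exact mem_union_left _ (mem_sdiff.2 ⟨hgF, fun h => (mem_filter.1 h).2.1 rfl⟩)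
  · intro x hx hxg
    rcases mem_union.1 hx with hx | hx
    · exact hlow x (mem_sdiff.1 hx).1 hxg
    rcases mem_union.1 hx with hx | hx
    · exact (hD x (mem_sdiff.1 hx).1).2.1 hxg.subset
    · exact (hE x hx).2 hxg.subset
  · have hlev : ∀ x ∈ F \ A ∪ (outerShadow g A \ F ∪ outerShadow g C),
        (x = g ∨ #x + 1 ≤ k ∧ ¬ x ⊆ g) ∧
        (x ∈ F ∨ x ∈ outerShadow g A ∨ x ∈ outerShadow g C) := by
      intro x hx
      rcases mem_union.1 hx with hx | hx
      · obtain ⟨hxF, hxA⟩ := mem_sdiff.1 hx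
        refine ⟨or_iff_not_imp_left.2 fun hne => ⟨?_, hFg x hxF hne⟩, Or.inl hxF⟩
        have h1 := hmax x hxF hne
        have h2 : #x ≠ k := fun h => hxA (mem_filter.2 ⟨hxF, hne, h⟩)
        omega
      rcases mem_union.1 hx with hx | hx
      · have h := hD x (mem_sdiff.1 hx).1
        exact ⟨Or.inr ⟨by omega, h.2.1⟩, Or.inr (Or.inl (mem_sdiff.1 hx).1)⟩
      · have h := hE x hx
        exact ⟨Or.inr ⟨by omega, h.2⟩, Or.inr (Or.inr hx)⟩
    intro x hx y hy z hz hxy hyz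
    obtain ⟨hxg, hx⟩ := hlev x hx
    obtain ⟨hyg, hy⟩ := hlev y hy
    obtain ⟨hzk, hz⟩ := hlev z hz
    have hxy' := card_lt_card hxy
    have hyz' := card_lt_card hyz
    -- Only the bottom of the chain can be `g`, so the top has size at most `k - 1`.
    have hzk : #z + 1 ≤ k := by
      rcases hzk with rfl | h
      · rcases hyg with rfl | h
        · exact absurd hyz (ssubset_irrefl _)
        · exact absurd hyz.subset h.2
      · exact h.1
    have hxF : x ∈ F := by
      rcases hx with h | h | h
      · exact h
      · have := (hD x h).1; omega
      · have := (hE x h).1; omega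
    rcases hy with hy | hy | hy
    · rcases hz with hz | hz | hz
      · exact hchain x hxF y hy z hz hxy hyz
      · obtain ⟨-, -, a, ha, hza⟩ := hD z hz
        exact hchain x hxF y hy a (hAF ha) hxy (hyz.trans hza)
      · obtain ⟨c, hc, a, ha, hca, hzc⟩ := hE2 z hz
        exact hchain x hxF y hy c hc hxy (hyz.trans hzc)
    · have := (hD y hy).1; omega
    · obtain ⟨c, hc, a, ha, hca, hyc⟩ := hE2 y hy
      exact hchain x hxF c hc a ha (hxy.trans hyc) hca
  · intro x hx
    rcases mem_union.1 hx with hx | hx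
    · exact Or.inl (hD x (mem_sdiff.1 hx).1).1
    · exact Or.inr (hE x hx).1

/-! ### An extremal family in the middle levels -/

/-- Twice the distance of `|x|` from `⌊n/2⌋ + 1/2`. -/
def levelDist {n : ℕ} (x : Finset (Fin n)) : ℕ :=
  (2 * (#x : ℤ) - (2 * ((n / 2 : ℕ) : ℤ) + 1)).natAbs

/-- Exchanging sets for as many sets closer to the middle lowers the total distance. -/
lemma sum_levelDist_lt {n k : ℕ} {F A N : Finset (Finset (Fin n))} (hAF : A ⊆ F)
    (hA : A.Nonempty) (hNF : Disjoint N F) (hcard : #A = #N) (hk : ∀ a ∈ A, #a = k)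
    (hlt : ∀ x ∈ N, ∀ a : Finset (Fin n), #a = k → levelDist x < levelDist a) :
    ∑ x ∈ F \ A ∪ N, levelDist x < ∑ x ∈ F, levelDist x := by
  rw [sum_union (hNF.symm.mono_left sdiff_subset), ← sum_sdiff hAF]
  refine Nat.add_lt_add_left ?_ _
  obtain ⟨a, ha⟩ := hA
  have hN : N.Nonempty := card_pos.1 (hcard ▸ card_pos.2 ⟨a, ha⟩)
  calc ∑ x ∈ N, levelDist x < ∑ _x ∈ N, levelDist a :=
        sum_lt_sum_of_nonempty hN fun x hx => hlt x hx a (hk a ha)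
    _ = ∑ _x ∈ A, levelDist a := by rw [sum_const, sum_const, hcard]
    _ = ∑ x ∈ A, levelDist x := by
        refine sum_congr rfl fun x hx => ?_
        rw [levelDist, levelDist, hk a ha, hk x hx]

lemma exists_extremal_family {n : ℕ} {g : Finset (Fin n)} (hg : n < 2 * #g) :
    ∃ F, GoodFamily g F ∧ (∀ F', GoodFamily g F' → #F' ≤ #F) ∧
      ∀ x ∈ F, x ≠ g → n / 2 ≤ #x ∧ 2 * #x ≤ n + 3 := by
  classical
  have hne : (univ.filter fun F => GoodFamily g F).Nonempty := by
    refine ⟨{g}, mem_filter.2 ⟨mem_univ _, mem_singleton_self g, ?_, ?_⟩⟩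
    · intro x hx
      rw [mem_singleton.1 hx]
      exact ssubset_irrefl _
    · intro x hx y hy z hz hxy
      rw [mem_singleton.1 hx, mem_singleton.1 hy] at hxy
      exact absurd hxy (ssubset_irrefl _)
  obtain ⟨M, hM, hMmax⟩ := exists_max_image _ (fun F => #F) hne
  have hne2 : (univ.filter fun F => GoodFamily g F ∧ #F = #M).Nonempty :=
    ⟨M, mem_filter.2 ⟨mem_univ _, (mem_filter.1 hM).2, rfl⟩⟩
  obtain ⟨F, hF, hFmin⟩ := exists_min_image _ (fun F => ∑ x ∈ F, levelDist x) hne2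
  obtain ⟨-, hFg, hFM⟩ := mem_filter.1 hF
  have hFmax : ∀ F', GoodFamily g F' → #F' ≤ #F := fun F' h => by
    rw [hFM]; exact hMmax F' (mem_filter.2 ⟨mem_univ _, h⟩)
  have key : ∀ (k : ℕ) (A N : Finset (Finset (Fin n))), A ⊆ F → A.Nonempty → Disjoint N F →
      #A ≤ #N → GoodFamily g (F \ A ∪ N) → (∀ a ∈ A, #a = k) →
      (∀ x ∈ N, ∀ a : Finset (Fin n), #a = k → levelDist x < levelDist a) → False := by
    intro k A N hAF hA hNF hAN hgood hk hlt
    have h1 := hFmax _ hgood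
    have h2 : #(F \ A ∪ N) = #F - #A + #N := by
      rw [card_union_of_disjoint (hNF.symm.mono_left sdiff_subset), card_sdiff_of_subset hAF]
    have h3 := card_le_card hAF
    have h4 : #A = #N := by omega
    have h5 := hFmin _ (mem_filter.2 ⟨mem_univ _, hgood, by omega⟩)
    have h6 := sum_levelDist_lt hAF hA hNF h4 hk hlt
    omega
  refine ⟨F, hFg, hFmax, fun x hx hxg => ⟨?_, ?_⟩⟩
  · by_contra hcon
    obtain ⟨m, hm, hmmin⟩ := exists_min_image F (fun x => #x) ⟨x, hx⟩
    have hmx := hmmin x hx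
    obtain ⟨A, N, hAF, hA, hNF, hAN, hgood, hk, hN⟩ :=
      hFg.push_up hg ⟨m, hm, rfl⟩ hmmin (by omega)
    refine key _ A N hAF hA hNF hAN hgood hk fun y hy a ha => ?_
    have := hN y hy
    unfold levelDist
    omega
  · by_contra hcon
    obtain ⟨m, hm, hmmax⟩ := exists_max_image (F.erase g) (fun x => #x)
      ⟨x, mem_erase.2 ⟨hxg, hx⟩⟩
    have hmx := hmmax x (mem_erase.2 ⟨hxg, hx⟩)
    obtain ⟨hmg, hmF⟩ := mem_erase.1 hm
    obtain ⟨A, N, hAF, hA, hNF, hAN, hgood, hk, hN⟩ :=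
      hFg.push_down ⟨m, hmF, hmg, rfl⟩ (fun y hy hyg => hmmax y (mem_erase.2 ⟨hyg, hy⟩))
        (by omega)
    refine key _ A N hAF hA hNF hAN hgood hk fun y hy a ha => ?_
    have := hN y hy
    unfold levelDist
    omega

/-! ### Tuples and subsets -/

/-- The set of positions at which a tuple equals `1`. -/
def toSubset {n : ℕ} (α : Fin n → Bool) : Finset (Fin n) := univ.filter fun i => α i = true

lemma toSubset_subset {n : ℕ} {α β : Fin n → Bool} : toSubset α ⊆ toSubset β ↔ α ≤ β := by
  simp only [toSubset, subset_iff, mem_filter, mem_univ, true_and, Pi.le_def, Bool.le_iff_imp]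

lemma toSubset_injective {n : ℕ} : Function.Injective (toSubset (n := n)) := fun _ _ h =>
  le_antisymm (toSubset_subset.1 h.subset) (toSubset_subset.1 h.superset)

lemma toSubset_ssubset {n : ℕ} {α β : Fin n → Bool} : toSubset α ⊂ toSubset β ↔ α < β := by
  rw [ssubset_iff_subset_not_subset, toSubset_subset, toSubset_subset, lt_iff_le_not_ge]

lemma toSubset_surjective {n : ℕ} : Function.Surjective (toSubset (n := n)) := fun x =>
  ⟨fun i => decide (i ∈ x), by ext i; simp [toSubset]⟩

lemma card_toSubset_gamma {n s : ℕ} (hs : s ≤ n) : #(toSubset (gammaTuple n s)) = s := by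
  have h : toSubset (gammaTuple n s) = (univ.filter fun i : Fin n => (i : ℕ) < n - s)ᶜ := by
    ext i
    simp [toSubset, gammaTuple]
  rw [h, card_compl, Fin.card_filter_val_lt, Fintype.card_fin]
  omega

lemma MemA.exists_goodFamily {n s : ℕ} {U' U'' : Set (Fin n → Bool)} (hU : MemA s U' U'') :
    ∃ F, GoodFamily (toSubset (gammaTuple n s)) F ∧ #F = U'.ncard + U''.ncard := by
  classical
  obtain ⟨⟨h1, h2, h3⟩, hγ⟩ := hU
  have hdisj : Disjoint U' U'' := Set.disjoint_left.2 fun a ha ha' => h3 a ha a ha' le_rfl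
  have hanti : ∀ {T : Set (Fin n → Bool)}, IsAntichain (· ≤ ·) T → ∀ a ∈ T, ∀ b ∈ T, ¬ a < b :=
    fun hT a ha b hb hab => hT ha hb hab.ne hab.le
  refine ⟨(U' ∪ U'').toFinset.image toSubset, ⟨?_, ?_, ?_⟩, ?_⟩
  · exact mem_image_of_mem _ (Set.mem_toFinset.2 (Or.inl hγ))
  · intro x hx hlt
    obtain ⟨α, hα, rfl⟩ := mem_image.1 hx
    rw [toSubset_ssubset] at hlt
    rcases Set.mem_toFinset.1 hα with hα | hα
    · exact hanti h1 _ hα _ hγ hlt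
    · exact h3 _ hγ _ hα hlt.le
  · intro x hx y hy z hz hxy hyz
    obtain ⟨α, hα, rfl⟩ := mem_image.1 hx
    obtain ⟨β, hβ, rfl⟩ := mem_image.1 hy
    obtain ⟨δ, hδ, rfl⟩ := mem_image.1 hz
    rw [toSubset_ssubset] at hxy hyz
    -- The middle of a 3-chain could be neither in `U'` nor in `U''`.
    rcases Set.mem_toFinset.1 hβ with hβ | hβ
    · rcases Set.mem_toFinset.1 hα with hα | hα
      · exact hanti h1 _ hα _ hβ hxy
      · exact h3 _ hβ _ hα hxy.le
    · rcases Set.mem_toFinset.1 hδ with hδ | hδ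
      · exact h3 _ hδ _ hβ hyz.le
      · exact hanti h2 _ hβ _ hδ hyz
  · rw [card_image_of_injective _ toSubset_injective, ← Set.ncard_eq_toFinset_card',
      Set.ncard_union_eq hdisj]

/-- The minimal members of a good family and its other members form a pair in `𝒜_s`. -/
lemma GoodFamily.exists_memA {n s : ℕ} {F : Finset (Finset (Fin n))}
    (hF : GoodFamily (toSubset (gammaTuple n s)) F) :
    ∃ T' T'' : Set (Fin n → Bool), MemA s T' T'' ∧ T'.ncard + T''.ncard = #F ∧
      ∀ α ∈ T' ∪ T'', toSubset α ∈ F := by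
  classical
  obtain ⟨hgF, hlow, hchain⟩ := hF
  set S : Set (Fin n → Bool) := {α | toSubset α ∈ F} with hS
  set T' : Set (Fin n → Bool) := {α | toSubset α ∈ F ∧ ∀ x ∈ F, ¬ x ⊂ toSubset α} with hT'
  have hT'S : T' ⊆ S := fun α hα => hα.1
  have hT'' : ∀ α ∈ S \ T', ∃ x ∈ F, x ⊂ toSubset α := by
    intro α hα
    by_contra hcon
    push Not at hcon
    exact hα.2 ⟨hα.1, hcon⟩
  refine ⟨T', S \ T', ⟨⟨?_, ?_, ?_⟩, hgF, hlow⟩, ?_, ?_⟩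
  · intro α hα β hβ hne hle
    exact hβ.2 _ hα.1 (toSubset_ssubset.2 (lt_of_le_of_ne hle hne))
  · intro α hα β hβ hne hle
    obtain ⟨x, hx, hxα⟩ := hT'' α hα
    exact hchain x hx _ hα.1 _ hβ.1 hxα (toSubset_ssubset.2 (lt_of_le_of_ne hle hne))
  · intro α hα β hβ hle
    obtain ⟨x, hx, hxβ⟩ := hT'' β hβ
    exact hα.2 x hx (hxβ.trans_subset (toSubset_subset.2 hle))
  · rw [add_comm, Set.ncard_sdiff_add_ncard_of_subset hT'S, ← Set.ncard_coe_finset F]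
    have himg : toSubset '' S = (F : Set (Finset (Fin n))) := by
      ext x
      constructor
      · rintro ⟨α, hα, rfl⟩
        exact hα
      · intro hx
        obtain ⟨α, rfl⟩ := toSubset_surjective x
        exact ⟨α, hx, rfl⟩
    rw [← himg, Set.ncard_image_of_injective _ toSubset_injective]
  · rintro α (hα | hα)
    · exact hα.1
    · exact hα.1

/-- For any integer `s` with `n/2 < s ≤ n`, there exists a
pair of antichains in `𝒜_s` which has the maximum cardinality among all pairs
in `𝒜_s` and in which every tuple other than `γ_s` has weight at most
`(n+3)/2` (i.e. `2‖α‖ ≤ n + 3`) and at least `⌊n/2⌋`. -/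
theorem exists_max_pair_with_weights_between {n s : ℕ} (hs1 : n < 2 * s) (hs2 : s ≤ n) :
    ∃ T' T'' : Set (Fin n → Bool), MemA s T' T'' ∧
      (∀ U' U'' : Set (Fin n → Bool), MemA s U' U'' →
        U'.ncard + U''.ncard ≤ T'.ncard + T''.ncard) ∧
      ∀ α ∈ T' ∪ T'', α ≠ gammaTuple n s →
        n / 2 ≤ bweight α ∧ 2 * bweight α ≤ n + 3 := by
  obtain ⟨F, hF, hmax, hlev⟩ :=
    exists_extremal_family (g := toSubset (gammaTuple n s)) (by rwa [card_toSubset_gamma hs2])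
  obtain ⟨T', T'', hT, hcard, hmem⟩ := hF.exists_memA
  refine ⟨T', T'', hT, ?_, ?_⟩
  · intro U' U'' hU
    obtain ⟨F', hF', hcard'⟩ := hU.exists_goodFamily
    rw [hcard, ← hcard']
    exact hmax F' hF'
  · intro α hα hne
    exact hlev _ (hmem α hα) (toSubset_injective.ne hne)
end

section
/- For any integer s with n/2 < s ≤ n, the cardinality of any pair of antichains (T', T'') ∈ 𝒜_s satisfies |T'| + |T''| ≤ 1 + C(n+1, ⌊n/2⌋+1) − C(s+1, ⌊n/2⌋+1), where C(a,b) denotes the binomial coefficient. -/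
open Finset

/-! ### Symmetric chain decompositions -/

/-- A nonempty saturated chain of finite sets whose sizes fill an interval `[lo, hi]` with
`lo + hi = c`. -/
def IsSymChain (c : ℕ) (C : Finset (Finset ℕ)) : Prop :=
  IsChain (· ⊆ ·) (C : Set (Finset ℕ)) ∧
    ∃ lo hi, lo ≤ hi ∧ lo + hi = c ∧ C.image card = Icc lo hi

/-- `SymDecomp c S`: the family `S` is a disjoint union of chains satisfying `IsSymChain c`. -/
inductive SymDecomp (c : ℕ) : Finset (Finset ℕ) → Prop
  | empty : SymDecomp c ∅
  | add (C S : Finset (Finset ℕ)) : IsSymChain c C → Disjoint C S → SymDecomp c S →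
      SymDecomp c (C ∪ S)

lemma SymDecomp.of_chain {c : ℕ} {C : Finset (Finset ℕ)} (h : IsSymChain c C) :
    SymDecomp c C := by
  simpa using SymDecomp.add C ∅ h (by simp) .empty

lemma SymDecomp.union {c : ℕ} {A B : Finset (Finset ℕ)} (hA : SymDecomp c A)
    (hB : SymDecomp c B) (hd : Disjoint A B) : SymDecomp c (A ∪ B) := by
  induction hA with
  | empty => simpa using hB
  | add C S hC hCS _ ih =>
    rw [disjoint_union_left] at hd
    rw [union_assoc]
    exact .add _ _ hC (disjoint_union_right.2 ⟨hCS, hd.1⟩) (ih hd.2)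

lemma chain_subset_of_card_le {C : Finset (Finset ℕ)}
    (hC : IsChain (· ⊆ ·) (C : Set (Finset ℕ))) {A B : Finset ℕ} (hA : A ∈ C) (hB : B ∈ C)
    (h : #A ≤ #B) : A ⊆ B := by
  rcases hC.total hA hB with h' | h'
  · exact h'
  · exact (eq_of_subset_of_card_le h' h).symm.subset

lemma card_injOn_chain {C : Finset (Finset ℕ)}
    (hC : IsChain (· ⊆ ·) (C : Set (Finset ℕ))) : Set.InjOn card (C : Set (Finset ℕ)) := by
  intro A hA B hB h
  exact eq_of_subset_of_card_le (chain_subset_of_card_le hC hA hB h.le) h.ge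

lemma image_card_erase {C : Finset (Finset ℕ)}
    (hC : IsChain (· ⊆ ·) (C : Set (Finset ℕ))) {A : Finset ℕ} (hA : A ∈ C) :
    (C.erase A).image card = (C.image card).erase #A := by
  ext j
  simp only [mem_image, mem_erase]
  constructor
  · rintro ⟨B, ⟨hne, hB⟩, rfl⟩
    exact ⟨fun h => hne (card_injOn_chain hC hB hA h), B, hB, rfl⟩
  · rintro ⟨hj, B, hB, rfl⟩
    exact ⟨B, ⟨fun h => hj (by rw [h]), hB⟩, rfl⟩

/-- Doubling of a single chain with top member `t`: it yields the chain `C ∪ {t ∪ {a}}` and,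
if `C` has at least two members, the chain of all `A ∪ {a}` with `A ∈ C`, `A ≠ t`. -/
lemma double_chain {c a : ℕ} {C : Finset (Finset ℕ)} (h : IsSymChain c C)
    (ha : ∀ A ∈ C, a ∉ A) : SymDecomp (c + 1) (C ∪ C.image (insert a)) := by
  obtain ⟨hC, lo, hi, hle, hsum, him⟩ := h
  obtain ⟨t, ht, htc⟩ : ∃ t ∈ C, #t = hi := by
    have : hi ∈ C.image card := by rw [him]; simp [hle]
    simpa using this
  have hrank : ∀ A ∈ C, lo ≤ #A ∧ #A ≤ hi := by
    intro A hA
    have : #A ∈ C.image card := mem_image_of_mem _ hA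
    rwa [him, mem_Icc] at this
  have htop : ∀ A ∈ C, A ⊆ t := fun A hA =>
    chain_subset_of_card_le hC hA ht (htc ▸ (hrank A hA).2)
  have hlong : IsSymChain (c + 1) (insert (insert a t) C) := by
    refine ⟨?_, lo, hi + 1, by omega, by omega, ?_⟩
    · rw [coe_insert]
      refine hC.insert fun B hB _ => Or.inr ?_
      exact (htop B hB).trans (subset_insert _ _)
    · rw [image_insert, him, card_insert_of_notMem (ha t ht), htc]
      ext j
      simp only [mem_insert, mem_Icc]
      omega
  have hsplit : C ∪ C.image (insert a)
      = insert (insert a t) C ∪ (C.erase t).image (insert a) := by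
    conv_lhs => rw [← insert_erase ht, image_insert, insert_erase ht]
    ext; simp only [mem_union, mem_insert]; tauto
  have hdisj : Disjoint (insert (insert a t) C) ((C.erase t).image (insert a)) := by
    rw [disjoint_left]
    intro X hX hX'
    obtain ⟨B, hB, rfl⟩ := mem_image.1 hX'
    rw [mem_erase] at hB
    rcases mem_insert.1 hX with h1 | h1
    · apply hB.1
      rw [← erase_insert (ha B hB.2), h1, erase_insert (ha t ht)]
    · exact ha _ h1 (mem_insert_self _ _)
  rw [hsplit]
  refine SymDecomp.add _ _ hlong hdisj ?_
  rcases hle.eq_or_lt with heq | hlt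
  · have : C.erase t = ∅ := by
      rw [← image_eq_empty (f := card), image_card_erase hC ht, him, htc, heq]
      simp
    rw [this]
    exact .empty
  · refine .of_chain ⟨?_, lo + 1, hi, by omega, by omega, ?_⟩
    · intro X hX Y hY _
      obtain ⟨A, hA, rfl⟩ := mem_image.1 (mem_coe.1 hX)
      obtain ⟨B, hB, rfl⟩ := mem_image.1 (mem_coe.1 hY)
      exact (hC.total (mem_of_mem_erase hA) (mem_of_mem_erase hB)).imp
        (insert_subset_insert a) (insert_subset_insert a)
    · have h1 : ((C.erase t).image (insert a)).image card
          = ((C.erase t).image card).image (· + 1) := by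
        rw [image_image, image_image]
        refine image_congr fun A hA => ?_
        simp [card_insert_of_notMem (ha A (mem_of_mem_erase hA))]
      rw [h1, image_card_erase hC ht, him, htc]
      ext j
      simp only [mem_image, mem_erase, mem_Icc]
      constructor
      · rintro ⟨i, hi, rfl⟩; omega
      · intro hj; exact ⟨j - 1, by omega, by omega⟩

lemma SymDecomp.double {c a : ℕ} {S : Finset (Finset ℕ)} (h : SymDecomp c S)
    (ha : ∀ A ∈ S, a ∉ A) : SymDecomp (c + 1) (S ∪ S.image (insert a)) := by
  induction h with
  | empty => simpa using SymDecomp.empty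
  | add C S hC hCS _ ih =>
    have haC : ∀ A ∈ C, a ∉ A := fun A hA => ha A (mem_union_left _ hA)
    have haS : ∀ A ∈ S, a ∉ A := fun A hA => ha A (mem_union_right _ hA)
    have := (double_chain hC haC).union (ih haS) ?_
    · convert this using 1
      rw [image_union]
      ext; simp only [mem_union]; tauto
    · rw [disjoint_left] at hCS ⊢
      intro X hX hX'
      rcases mem_union.1 hX with h1 | h1 <;> rcases mem_union.1 hX' with h2 | h2
      · exact hCS h1 h2
      · obtain ⟨B, _, rfl⟩ := mem_image.1 h2
        exact haC _ h1 (mem_insert_self _ _)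
      · obtain ⟨B, _, rfl⟩ := mem_image.1 h1
        exact haS _ h2 (mem_insert_self _ _)
      · obtain ⟨A, hA, rfl⟩ := mem_image.1 h1
        obtain ⟨B, hB, hBA⟩ := mem_image.1 h2
        have : B = A := by rw [← erase_insert (haS B hB), hBA, erase_insert (haC A hA)]
        exact hCS hA (this ▸ hB)

lemma symDecomp_powerset (m : ℕ) : SymDecomp m (range m).powerset := by
  induction m with
  | zero =>
    refine .of_chain ⟨?_, 0, 0, le_rfl, rfl, ?_⟩ <;> simp
  | succ m ih =>
    rw [range_add_one, powerset_insert]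
    exact ih.double fun A hA hm => by simpa using mem_powerset.1 hA hm

/-- Deleting `∅` shortens the chain from rank `0` to rank `c` to one with ranks `1, …, c`,
whose end ranks add up to `c + 1` (and which disappears if `c = 0`). -/
lemma SymDecomp.erase_empty {c : ℕ} {S : Finset (Finset ℕ)} (h : SymDecomp c S)
    (he : ∅ ∈ S) : ∃ S₁ S₂, SymDecomp c S₁ ∧ SymDecomp (c + 1) S₂ ∧ Disjoint S₁ S₂ ∧
      S₁ ∪ S₂ = S.erase ∅ := by
  induction h with
  | empty => simp at he
  | add C S hC hCS hS ih =>
    by_cases heC : ∅ ∈ C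
    · have heS : ∅ ∉ S := disjoint_left.1 hCS heC
      refine ⟨S, C.erase ∅, hS, ?_, (hCS.mono_left (erase_subset _ _)).symm, ?_⟩
      · obtain ⟨hch, lo, hi, hle, hsum, him⟩ := hC
        have h0 : lo = 0 := by
          have : #(∅ : Finset ℕ) ∈ C.image card := mem_image_of_mem _ heC
          rw [him] at this
          simpa using this
        have him' := image_card_erase hch heC
        rw [him, card_empty] at him'
        rcases Nat.eq_zero_or_pos c with hc | hc
        · have : C.erase ∅ = ∅ := by
            rw [← image_eq_empty (f := card), him']
            have : hi = 0 := by omega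
            subst h0 this
            simp
          rw [this]
          exact .empty
        · refine .of_chain ⟨hch.mono (by simp), 1, c, hc, by omega, ?_⟩
          rw [him']
          ext j
          simp only [mem_erase, mem_Icc]
          omega
      · rw [erase_union_distrib, erase_eq_of_notMem heS, union_comm]
    · have heS : ∅ ∈ S := by simpa [heC] using he
      obtain ⟨S₁, S₂, h₁, h₂, hd, hu⟩ := ih heS
      have hsub : Disjoint C (S₁ ∪ S₂) := by
        rw [hu]; exact hCS.mono_right (erase_subset _ _)
      rw [disjoint_union_right] at hsub
      refine ⟨C ∪ S₁, S₂, .add _ _ hC hsub.1 h₁, h₂, disjoint_union_left.2 ⟨hsub.2, hd⟩, ?_⟩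
      rw [erase_union_distrib, erase_eq_of_notMem heC, ← hu, union_assoc]

/-! ### The family of sets meeting `range m` -/

/-- The subsets of `range n` that meet `range m`. -/
def hitting (m n : ℕ) : Finset (Finset ℕ) :=
  {A ∈ (range n).powerset | ∃ i < m, i ∈ A}

lemma hitting_succ {m n : ℕ} (h : m ≤ n) :
    hitting m (n + 1) = hitting m n ∪ (hitting m n).image (insert n) := by
  unfold hitting
  rw [range_add_one, powerset_insert, filter_union, filter_image]
  congr 2
  ext A
  simp only [mem_filter, mem_insert]
  refine and_congr_right fun _ => exists_congr fun i => and_congr_right fun hi => ?_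
  have : i ≠ n := by omega
  simp [this]

lemma hitting_decomp {m n : ℕ} (h : m ≤ n) : ∃ S₁ S₂, SymDecomp n S₁ ∧ SymDecomp (n + 1) S₂ ∧
    Disjoint S₁ S₂ ∧ S₁ ∪ S₂ = hitting m n := by
  induction n, h using Nat.le_induction with
  | base =>
    have hbase : hitting m m = (range m).powerset.erase ∅ := by
      ext A
      simp only [hitting, mem_filter, mem_erase, mem_powerset, ← nonempty_iff_ne_empty]
      constructor
      · rintro ⟨hA, i, _, hi⟩; exact ⟨⟨i, hi⟩, hA⟩
      · rintro ⟨⟨i, hi⟩, hA⟩; exact ⟨hA, i, mem_range.1 (hA hi), hi⟩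
    rw [hbase]
    exact (symDecomp_powerset m).erase_empty (by simp)
  | succ n hmn ih =>
    obtain ⟨S₁, S₂, h₁, h₂, hd, hu⟩ := ih
    have hn : ∀ A ∈ S₁ ∪ S₂, n ∉ A := by
      intro A hA hnA
      rw [hu, hitting, mem_filter, mem_powerset] at hA
      simpa using hA.1 hnA
    have hn1 : ∀ A ∈ S₁, n ∉ A := fun A hA => hn A (mem_union_left _ hA)
    have hn2 : ∀ A ∈ S₂, n ∉ A := fun A hA => hn A (mem_union_right _ hA)
    refine ⟨_, _, h₁.double hn1, h₂.double hn2, ?_, ?_⟩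
    · rw [disjoint_left] at hd ⊢
      intro X hX hX'
      rcases mem_union.1 hX with h1 | h1 <;> rcases mem_union.1 hX' with h2 | h2
      · exact hd h1 h2
      · obtain ⟨B, _, rfl⟩ := mem_image.1 h2
        exact hn1 _ h1 (mem_insert_self _ _)
      · obtain ⟨B, _, rfl⟩ := mem_image.1 h1
        exact hn2 _ h2 (mem_insert_self _ _)
      · obtain ⟨A, hA, rfl⟩ := mem_image.1 h1
        obtain ⟨B, hB, hBA⟩ := mem_image.1 h2
        have : B = A := by rw [← erase_insert (hn2 B hB), hBA, erase_insert (hn1 A hA)]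
        exact hd hA (this ▸ hB)
    · rw [hitting_succ hmn, ← hu, image_union]
      ext; simp only [mem_union]; tauto

/-! ### Antichains against symmetric chains -/

lemma card_inter_chain_le_one {C T : Finset (Finset ℕ)}
    (hC : IsChain (· ⊆ ·) (C : Set (Finset ℕ)))
    (hT : IsAntichain (· ⊆ ·) (T : Set (Finset ℕ))) : #(C ∩ T) ≤ 1 := by
  rw [card_le_one]
  intro A hA B hB
  rw [mem_inter] at hA hB
  rcases hC.total hA.1 hB.1 with h | h
  · exact hT.eq hA.2 hB.2 h
  · exact (hT.eq hB.2 hA.2 h).symm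

lemma chain_bound {n c : ℕ} (hc : c = n ∨ c = n + 1) {C T U : Finset (Finset ℕ)}
    (hC : IsSymChain c C) (hT : IsAntichain (· ⊆ ·) (T : Set (Finset ℕ)))
    (hU : IsAntichain (· ⊆ ·) (U : Set (Finset ℕ))) (hTU : Disjoint T U) :
    #(C ∩ T) + #(C ∩ U) ≤ #{A ∈ C | #A = n / 2} + #{A ∈ C | #A = n / 2 + 1} := by
  obtain ⟨hch, lo, hi, hle, hsum, him⟩ := hC
  have hT1 := card_inter_chain_le_one hch hT
  have hU1 := card_inter_chain_le_one hch hU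
  have hpos : ∀ j, lo ≤ j → j ≤ hi → 0 < #{A ∈ C | #A = j} := by
    intro j h1 h2
    have : j ∈ C.image card := by rw [him]; simp [h1, h2]
    obtain ⟨A, hA, hAj⟩ := mem_image.1 this
    exact card_pos.2 ⟨A, by simp [hA, hAj]⟩
  rcases hle.eq_or_lt with heq | hlt
  · have hcard : #C = 1 := by
      rw [← card_image_of_injOn (card_injOn_chain hch), him, heq]; simp
    have h1 : #(C ∩ T) + #(C ∩ U) ≤ #C := by
      rw [← card_union_of_disjoint (hTU.mono inter_subset_right inter_subset_right)]
      exact card_le_card (union_subset inter_subset_left inter_subset_left)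
    have hlo : lo = n / 2 ∨ lo = n / 2 + 1 := by omega
    have := hpos lo le_rfl hle
    rcases hlo with h | h <;> rw [h] at this <;> omega
  · have h1 := hpos (n / 2) (by omega) (by omega)
    have h2 := hpos (n / 2 + 1) (by omega) (by omega)
    omega

lemma SymDecomp.bound {n c : ℕ} (hc : c = n ∨ c = n + 1) {S T U : Finset (Finset ℕ)}
    (hS : SymDecomp c S) (hT : IsAntichain (· ⊆ ·) (T : Set (Finset ℕ)))
    (hU : IsAntichain (· ⊆ ·) (U : Set (Finset ℕ))) (hTU : Disjoint T U) :
    #(S ∩ T) + #(S ∩ U) ≤ #{A ∈ S | #A = n / 2} + #{A ∈ S | #A = n / 2 + 1} := by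
  induction hS with
  | empty => simp
  | add C S hC hCS _ ih =>
    have h := chain_bound hc hC hT hU hTU
    rw [union_inter_distrib_right, union_inter_distrib_right, filter_union, filter_union,
      card_union_of_disjoint (hCS.mono inter_subset_left inter_subset_left),
      card_union_of_disjoint (hCS.mono inter_subset_left inter_subset_left),
      card_union_of_disjoint (hCS.mono (filter_subset _ _) (filter_subset _ _)),
      card_union_of_disjoint (hCS.mono (filter_subset _ _) (filter_subset _ _))]
    omega

lemma hitting_bound {m n : ℕ} (h : m ≤ n) {T U : Finset (Finset ℕ)}
    (hT : IsAntichain (· ⊆ ·) (T : Set (Finset ℕ)))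
    (hU : IsAntichain (· ⊆ ·) (U : Set (Finset ℕ))) (hTU : Disjoint T U)
    (hTs : T ⊆ hitting m n) (hUs : U ⊆ hitting m n) :
    #T + #U ≤ #{A ∈ hitting m n | #A = n / 2} + #{A ∈ hitting m n | #A = n / 2 + 1} := by
  obtain ⟨S₁, S₂, h₁, h₂, hd, hu⟩ := hitting_decomp h
  have b₁ := h₁.bound (n := n) (.inl rfl) hT hU hTU
  have b₂ := h₂.bound (n := n) (.inr rfl) hT hU hTU
  rw [← inter_eq_right.2 hTs, ← inter_eq_right.2 hUs, ← hu,
    union_inter_distrib_right, union_inter_distrib_right, filter_union, filter_union,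
    card_union_of_disjoint (hd.mono inter_subset_left inter_subset_left),
    card_union_of_disjoint (hd.mono inter_subset_left inter_subset_left),
    card_union_of_disjoint (hd.mono (filter_subset _ _) (filter_subset _ _)),
    card_union_of_disjoint (hd.mono (filter_subset _ _) (filter_subset _ _))]
  omega

lemma card_hitting_level (m n : ℕ) (j : ℕ) :
    #{A ∈ hitting m n | #A = j} + (n - m).choose j = n.choose j := by
  have hsub : (Ico m n).powersetCard j ⊆ (range n).powersetCard j :=
    powersetCard_mono fun i hi => by simp at hi ⊢; omega
  have : {A ∈ hitting m n | #A = j} = (range n).powersetCard j \ (Ico m n).powersetCard j := by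
    ext A
    simp only [hitting, mem_filter, mem_powerset, mem_sdiff, mem_powersetCard]
    constructor
    · rintro ⟨⟨hA, i, him, hi⟩, hc⟩
      refine ⟨⟨hA, hc⟩, fun hh => ?_⟩
      have := mem_Ico.1 (hh.1 hi)
      omega
    · rintro ⟨⟨hA, hc⟩, hn⟩
      refine ⟨⟨hA, ?_⟩, hc⟩
      by_contra! hcon
      refine hn ⟨fun i hi => mem_Ico.2 ⟨?_, mem_range.1 (hA hi)⟩, hc⟩
      by_contra! hlt
      exact hcon i hlt hi
  rw [this]
  have := card_sdiff_add_card_eq_card hsub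
  simpa using this

/-! ### From binary tuples to sets -/

/-- The set of 1-positions of a binary tuple, as a subset of `range n`. -/
def ones {n : ℕ} (x : Fin n → Bool) : Finset ℕ :=
  (univ.filter fun i => x i = true).map Fin.valEmbedding

lemma ones_subset {n : ℕ} {x y : Fin n → Bool} : ones x ⊆ ones y ↔ x ≤ y := by
  rw [ones, ones, map_subset_map, Pi.le_def]
  refine forall_congr' fun i => ?_
  cases hx : x i <;> cases hy : y i <;> simp [hx, hy]

lemma ones_injective {n : ℕ} : Function.Injective (ones (n := n)) := fun _ _ h =>
  le_antisymm (ones_subset.1 h.subset) (ones_subset.1 h.symm.subset)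

lemma ones_mem_hitting {n s : ℕ} {x : Fin n → Bool} (h : ¬ x ≤ gammaTuple n s) :
    ones x ∈ hitting (n - s) n := by
  rw [Pi.le_def] at h
  push Not at h
  obtain ⟨i, hi⟩ := h
  rw [hitting, mem_filter, mem_powerset]
  have hx : x i = true := by
    by_contra hc
    rw [Bool.not_eq_true] at hc
    rw [hc] at hi
    exact absurd hi (not_lt_of_ge (Bool.false_le _))
  refine ⟨fun j hj => ?_, i, ?_, ?_⟩
  · simp only [ones, mem_map] at hj
    obtain ⟨a, _, rfl⟩ := hj
    simp
  · by_contra! hle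
    simp [gammaTuple, hle, hx] at hi
  · simp only [ones, mem_map]
    exact ⟨i, by simp [hx], rfl⟩

lemma isAntichain_image_ones {n : ℕ} {T : Set (Fin n → Bool)} (h : IsAntichain (· ≤ ·) T) :
    IsAntichain (· ⊆ ·) (ones '' T) := by
  rintro _ ⟨x, hx, rfl⟩ _ ⟨y, hy, rfl⟩ hne hsub
  exact h hx hy (fun e => hne (by rw [e])) (ones_subset.1 hsub)

/-- For any integer `s` with `n/2 < s ≤ n`, the cardinality
of any pair of antichains `(T', T'') ∈ 𝒜_s` satisfies
`|T'| + |T''| ≤ 1 + C(n+1, ⌊n/2⌋+1) − C(s+1, ⌊n/2⌋+1)`. -/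
theorem card_pair_le_of_memA {n s : ℕ} (hs1 : n < 2 * s) (hs2 : s ≤ n)
    (T' T'' : Set (Fin n → Bool)) (h : MemA s T' T'') :
    T'.ncard + T''.ncard ≤
      1 + Nat.choose (n + 1) (n / 2 + 1) - Nat.choose (s + 1) (n / 2 + 1) := by
  classical
  obtain ⟨⟨h1, h2, hb⟩, hg⟩ := h
  set R := T' \ {gammaTuple n s} with hR
  have hRsub : R ⊆ T' := Set.sdiff_subset
  have hcard : T'.ncard = R.ncard + 1 := (Set.ncard_sdiff_singleton_add_one hg).symm
  let A := (ones '' R).toFinset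
  let B := (ones '' T'').toFinset
  have hA : #A = R.ncard := by
    rw [← Set.ncard_eq_toFinset_card', Set.ncard_image_of_injective _ ones_injective]
  have hB : #B = T''.ncard := by
    rw [← Set.ncard_eq_toFinset_card', Set.ncard_image_of_injective _ ones_injective]
  have key := hitting_bound (m := n - s) (n := n) (T := A) (U := B) (by omega)
    (by simpa only [A, Set.coe_toFinset] using isAntichain_image_ones (h1.subset hRsub))
    (by simpa only [B, Set.coe_toFinset] using isAntichain_image_ones h2)
    (by
      rw [disjoint_left]
      intro X hX hX'
      obtain ⟨x, hx, rfl⟩ := Set.mem_toFinset.1 hX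
      obtain ⟨y, hy, hxy⟩ := Set.mem_toFinset.1 hX'
      exact hb x (hRsub hx) y hy (ones_subset.1 hxy.subset))
    (by
      intro X hX
      obtain ⟨x, hx, rfl⟩ := Set.mem_toFinset.1 hX
      exact ones_mem_hitting fun hle => hx.2 (h1.eq (hRsub hx) hg hle))
    (by
      intro X hX
      obtain ⟨x, hx, rfl⟩ := Set.mem_toFinset.1 hX
      exact ones_mem_hitting (hb _ hg x hx))
  have c1 := card_hitting_level (n - s) n (n / 2)
  have c2 := card_hitting_level (n - s) n (n / 2 + 1)
  rw [Nat.sub_sub_self hs2] at c1 c2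
  rw [Nat.choose_succ_succ n, Nat.choose_succ_succ s, hcard, ← hA, ← hB]
  simp only [Nat.succ_eq_add_one]
  omega
end
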